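/- (Lemma 2.10) Let p be a general pressure with p ∈ C³((0,∞)), p'(τ) < 0 and p''(τ) > 0 for all τ > 0, and let the initial data (τ₀,u₀) satisfy Assumption A. Then every C¹ solution (τ,u) of the p-system with pressure p on ℝ × [0,T) with this initial data satisfies y(x,t) ≤ Y and q(x,t) ≤ Q for all (x,t), where Y = max{0, sup_x y(x,0)} and Q = max{0, sup_x q(x,0)}. -/

import Mathlib

open Real Set MeasureTheory Filter

/-- A `Cᵏ` solution `(τ, u)` of the p-system with general pressure `p` on `ℝ × I`. -/
def GenPSysSol (p : ℝ → ℝ) (I : Set ℝ) (k : ℕ) (τ u : ℝ → ℝ → ℝ) : Prop :=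
  (∀ x t, t ∈ I → 0 < τ x t) ∧
  ContDiffOn ℝ k (fun q : ℝ × ℝ => τ q.1 q.2) (Set.univ ×ˢ I) ∧
  ContDiffOn ℝ k (fun q : ℝ × ℝ => u q.1 q.2) (Set.univ ×ˢ I) ∧
  (∀ x : ℝ, ∀ t ∈ I, deriv (fun t' => τ x t') t - deriv (fun x' => u x' t) x = 0) ∧
  (∀ x : ℝ, ∀ t ∈ I, deriv (fun t' => u x t') t + deriv (fun x' => p (τ x' t)) x = 0)

/-- Assumption A: `τ₀, u₀` are `C¹` with `‖τ₀‖_{C¹} + ‖u₀‖_{C¹} ≤ M₁` and `τ₀ ≥ M₂ > 0`. -/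
def AssumptionA (M₁ M₂ : ℝ) (τ₀ u₀ : ℝ → ℝ) : Prop :=
  ContDiff ℝ 1 τ₀ ∧ ContDiff ℝ 1 u₀ ∧ 0 < M₁ ∧ 0 < M₂ ∧
  (∀ x, |τ₀ x| + |deriv τ₀ x| + |u₀ x| + |deriv u₀ x| ≤ M₁) ∧
  (∀ x, M₂ ≤ τ₀ x)

/-!
Along a characteristic of its own family, the weighted gradient `√c w_x` of a Riemann invariant `w`
has derivative `c'(τ) w_x² / (2 √c) ≤ 0`, because convexity of `p` makes the sound speed `c`
decrease in `τ`. It therefore suffices to trace characteristics back to time `0`. Nothing bounds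
`τ` away from `0`, so `c` may be unbounded; but in the Eulerian coordinate `z`, with
`dz = τ dx + u dt`, characteristics move with speed `u ± τ c`, and monotonicity of `c` gives
`τ c(τ) ≤ 2 ∫_{τ/2}^τ c`, which is controlled by the Riemann invariants. A backward cone
`|z| ≤ L - K t` thus contains the past of its characteristics, it is compact since `τ ≥ M₂`
initially, and a first-bad-time argument on it bounds first the Riemann invariants and then the
gradient variables.
-/

open Function
open scoped Topology

/-- The partial derivative `F_x` of a function `F x t` of space and time. -/
noncomputable def spaceDeriv (F : ℝ → ℝ → ℝ) (x t : ℝ) : ℝ := deriv (fun x' => F x' t) x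

/-- The partial derivative `F_t` of a function `F x t` of space and time. -/
noncomputable def timeDeriv (F : ℝ → ℝ → ℝ) (x t : ℝ) : ℝ := deriv (fun t' => F x t') t

/-! ### Calculus along curves -/

section Calculus

lemma forall_mem_of_isCompact_of_forall_lt {α : Type*} [TopologicalSpace α] {S : Set α}
    {time : α → ℝ} {P : α → Prop} (htime : ContinuousOn time S)
    (hP : IsCompact {a ∈ S | ¬P a})
    (hind : ∀ a ∈ S, (∀ b ∈ S, time b < time a → P b) → P a) : ∀ a ∈ S, P a := by
  by_contra! hne
  obtain ⟨a, ⟨haS, haP⟩, hmin⟩ := hP.exists_isMinOn hne (htime.mono (sep_subset _ _))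
  refine haP (hind a haS fun b hb hlt => ?_)
  by_contra hbP
  exact (hmin ⟨hb, hbP⟩).not_gt hlt

lemma eventually_lt_left_of_hasDerivAt_pos {f : ℝ → ℝ} {d t : ℝ} (hf : HasDerivAt f d t)
    (hd : 0 < d) : ∀ᶠ s in 𝓝[<] t, f s < f t := by
  have hslope := (hasDerivAt_iff_tendsto_slope.1 hf).mono_left
    (nhdsWithin_mono t fun s (hs : s < t) => hs.ne)
  filter_upwards [hslope.eventually_const_lt hd, self_mem_nhdsWithin] with s hs (hst : s < t)
  exact (slope_pos_iff_gt hst).1 hs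

lemma eventually_le_left_of_hasDerivAt_nonpos {f f' : ℝ → ℝ} {t : ℝ}
    (hf : ∀ᶠ s in 𝓝 t, HasDerivAt f (f' s) s) (hf' : ∀ᶠ s in 𝓝 t, f' s ≤ 0) :
    ∀ᶠ s in 𝓝[<] t, f t ≤ f s := by
  obtain ⟨ε, hε, hball⟩ := Metric.eventually_nhds_iff_ball.1 (hf.and hf')
  have hanti : AntitoneOn f (Metric.ball t ε) :=
    antitoneOn_of_hasDerivWithinAt_nonpos (convex_ball t ε)
      (fun s hs => (hball s hs).1.continuousAt.continuousWithinAt)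
      (fun s hs => (hball s (interior_subset hs)).1.hasDerivWithinAt)
      (fun s hs => (hball s (interior_subset hs)).2)
  filter_upwards [nhdsWithin_le_nhds (Metric.ball_mem_nhds t hε), self_mem_nhdsWithin]
    with s hs (hst : s < t)
  exact hanti hs (Metric.mem_ball_self hε) hst.le

lemma exists_hasDerivAt_of_contDiffAt {a : ℝ → ℝ → ℝ} {x t : ℝ}
    (ha : ContDiffAt ℝ 1 (uncurry a) (x, t)) :
    ∃ X : ℝ → ℝ, X t = x ∧ ∀ᶠ s in 𝓝 t, HasDerivAt X (a (X s) s) s := by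
  -- The pair (position, clock) solves an autonomous equation.
  obtain ⟨γ, hγt, ε, hε, hγ⟩ :=
    (ha.prodMk (contDiffAt_const (c := (1 : ℝ))))
      |>.exists_forall_mem_closedBall_exists_eq_forall_mem_Ioo_hasDerivAt₀ t
  have hposition : ∀ s ∈ Ioo (t - ε) (t + ε),
      HasDerivAt (fun s => (γ s).1) (a (γ s).1 (γ s).2) s := fun s hs =>
    (hasFDerivAt_fst (𝕜 := ℝ)).comp_hasDerivAt (f := γ) s (hγ s hs)
  have hclock : ∀ s ∈ Ioo (t - ε) (t + ε), HasDerivAt (fun s => (γ s).2) 1 s := fun s hs =>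
    (hasFDerivAt_snd (𝕜 := ℝ)).comp_hasDerivAt (f := γ) s (hγ s hs)
  have hclock_eq : EqOn (fun s => (γ s).2) id (Ioo (t - ε) (t + ε)) :=
    isOpen_Ioo.eqOn_of_deriv_eq isPreconnected_Ioo
      (fun s hs => (hclock s hs).differentiableAt.differentiableWithinAt) differentiableOn_id
      (fun s hs => by rw [(hclock s hs).deriv, deriv_id])
      (x := t) ⟨by linarith, by linarith⟩ (by simp [hγt])
  refine ⟨fun s => (γ s).1, by simp [hγt], ?_⟩
  filter_upwards [Ioo_mem_nhds (by linarith : t - ε < t) (by linarith : t < t + ε)] with s hs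
  have hs' := hposition s hs
  rwa [show (γ s).2 = s from hclock_eq hs] at hs'

lemma hasDerivAt_of_hasFDerivWithinAt_univ_prod {G : ℝ × ℝ → ℝ} {G' : ℝ × ℝ →L[ℝ] ℝ} {I : Set ℝ}
    {x t : ℝ} (hG : HasFDerivWithinAt G G' (univ ×ˢ I) (x, t)) (ht : t ∈ I) :
    HasDerivAt (fun x' => G (x', t)) (G' (1, 0)) x :=
  hasDerivWithinAt_univ.1 <| hG.comp_hasDerivWithinAt (f := fun x' => (x', t)) x
    ((hasDerivAt_id x).prodMk (hasDerivAt_const x t)).hasDerivWithinAt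
    fun _ _ => ⟨mem_univ _, ht⟩

lemma clm_prod_apply_eq_add (A : ℝ × ℝ →L[ℝ] ℝ) (q : ℝ × ℝ) :
    A q = q.1 * A (1, 0) + q.2 * A (0, 1) := by
  rw [← smul_eq_mul, ← smul_eq_mul, ← map_smul, ← map_smul, ← map_add]
  simp

variable {F : ℝ → ℝ → ℝ}

lemma spaceDeriv_eq_fderivWithin {I : Set ℝ} {x t : ℝ}
    (hF : DifferentiableOn ℝ (uncurry F) (univ ×ˢ I)) (ht : t ∈ I) :
    spaceDeriv F x t = fderivWithin ℝ (uncurry F) (univ ×ˢ I) (x, t) (1, 0) :=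
  (hasDerivAt_of_hasFDerivWithinAt_univ_prod
    (hF (x, t) ⟨mem_univ _, ht⟩).hasFDerivWithinAt ht).deriv

lemma hasDerivAt_spaceDeriv {I : Set ℝ} {x t : ℝ}
    (hF : DifferentiableOn ℝ (uncurry F) (univ ×ˢ I)) (ht : t ∈ I) :
    HasDerivAt (fun x' => F x' t) (spaceDeriv F x t) x :=
  (hasDerivAt_of_hasFDerivWithinAt_univ_prod
    (hF (x, t) ⟨mem_univ _, ht⟩).hasFDerivWithinAt ht).differentiableAt.hasDerivAt

lemma continuousOn_spaceDeriv {I : Set ℝ} (hI : UniqueDiffOn ℝ I)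
    (hF : ContDiffOn ℝ 1 (uncurry F) (univ ×ˢ I)) :
    ContinuousOn (uncurry (spaceDeriv F)) (univ ×ˢ I) :=
  ((hF.continuousOn_fderivWithin (uniqueDiffOn_univ.prod hI) le_rfl).clm_apply
    continuousOn_const).congr fun _ hq =>
      spaceDeriv_eq_fderivWithin (hF.differentiableOn one_ne_zero) hq.2

lemma spaceDeriv_eq_fderiv {x t : ℝ} (hF : DifferentiableAt ℝ (uncurry F) (x, t)) :
    spaceDeriv F x t = fderiv ℝ (uncurry F) (x, t) (1, 0) :=
  (hF.hasFDerivAt.comp_hasDerivAt (f := fun x' => (x', t)) x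
    ((hasDerivAt_id x).prodMk (hasDerivAt_const x t))).deriv

lemma timeDeriv_eq_fderiv {x t : ℝ} (hF : DifferentiableAt ℝ (uncurry F) (x, t)) :
    timeDeriv F x t = fderiv ℝ (uncurry F) (x, t) (0, 1) :=
  (hF.hasFDerivAt.comp_hasDerivAt (f := fun t' => (x, t')) t
    ((hasDerivAt_const t x).prodMk (hasDerivAt_id t))).deriv

lemma hasDerivAt_timeDeriv {x t : ℝ} (hF : DifferentiableAt ℝ (uncurry F) (x, t)) :
    HasDerivAt (fun t' => F x t') (timeDeriv F x t) t :=
  (hF.comp (f := fun t' => (x, t')) t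
    ((differentiableAt_const x).prodMk differentiableAt_id)).hasDerivAt

lemma fderiv_uncurry_apply {x t : ℝ} (hF : DifferentiableAt ℝ (uncurry F) (x, t)) (v w : ℝ) :
    fderiv ℝ (uncurry F) (x, t) (v, w) = v * spaceDeriv F x t + w * timeDeriv F x t := by
  rw [clm_prod_apply_eq_add, spaceDeriv_eq_fderiv hF, timeDeriv_eq_fderiv hF]

lemma hasDerivAt_along_curve {X : ℝ → ℝ} {v t : ℝ}
    (hF : DifferentiableAt ℝ (uncurry F) (X t, t)) (hX : HasDerivAt X v t) :
    HasDerivAt (fun s => F (X s) s) (timeDeriv F (X t) t + v * spaceDeriv F (X t) t) t := by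
  refine (hF.hasFDerivAt.comp_hasDerivAt (f := fun s => (X s, s)) t
    (hX.prodMk (hasDerivAt_id t))).congr_deriv ?_
  rw [fderiv_uncurry_apply hF]
  ring

lemma continuousAt_spaceDeriv {P : ℝ × ℝ} (hF : ContDiffAt ℝ 1 (uncurry F) P) :
    ContinuousAt (uncurry (spaceDeriv F)) P := by
  refine ((hF.continuousAt_fderiv one_ne_zero).clm_apply
    (continuousAt_const (y := ((1 : ℝ), (0 : ℝ))))).congr ?_
  filter_upwards [hF.eventually (by simp)] with q hq
  exact (spaceDeriv_eq_fderiv (hq.differentiableAt one_ne_zero)).symm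

lemma tendsto_prodMk_add_of_continuousAt {X : ℝ → ℝ} {t : ℝ} (hX : ContinuousAt X t) :
    Tendsto (fun q : ℝ × ℝ => (X q.2 + q.1, q.2)) (𝓝[≠] 0 ×ˢ 𝓝 t) (𝓝 (X t, t)) := by
  have hincrement : Tendsto (fun q : ℝ × ℝ => q.1) (𝓝[≠] 0 ×ˢ 𝓝 t) (𝓝 0) :=
    (tendsto_id.mono_left nhdsWithin_le_nhds).comp tendsto_fst
  simpa using ((hX.tendsto.comp tendsto_snd).add hincrement).prodMk_nhds tendsto_snd

lemma tendsto_spaceDifferenceQuotient {X : ℝ → ℝ} {t : ℝ}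
    (hF : ContDiffAt ℝ 1 (uncurry F) (X t, t)) (hX : ContinuousAt X t) :
    Tendsto (fun q : ℝ × ℝ => q.1⁻¹ * (F (X q.2 + q.1) q.2 - F (X q.2) q.2))
      (𝓝[≠] 0 ×ˢ 𝓝 t) (𝓝 (spaceDeriv F (X t) t)) := by
  have hpath : Tendsto (fun q : ℝ × ℝ => (X q.2, q.2)) (𝓝[≠] 0 ×ˢ 𝓝 t) (𝓝 (X t, t)) :=
    (hX.tendsto.prodMk_nhds tendsto_id).comp tendsto_snd
  have hshift := tendsto_prodMk_add_of_continuousAt hX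
  have hstrict := ((hF.hasStrictFDerivAt one_ne_zero).isLittleO.comp_tendsto
    (hshift.prodMk_nhds hpath))
  have hlittleO := (hstrict.trans_isBigO (Asymptotics.isBigO_of_le _ fun q => by
    simp [Prod.norm_def])).tendsto_inv_smul_nhds_zero (g := fun q : ℝ × ℝ => q.1)
  refine (hlittleO.add_const (spaceDeriv F (X t) t)).congr' ?_ |>.trans (by simp)
  filter_upwards [tendsto_fst.eventually (self_mem_nhdsWithin : ∀ᶠ e : ℝ in 𝓝[≠] 0, e ≠ 0)]
    with q hq
  have hq : q.1 ≠ 0 := hq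
  have hD := fderiv_uncurry_apply (hF.differentiableAt one_ne_zero) q.1 0
  simp only [comp_apply, uncurry_apply_pair, Prod.mk_sub_mk, add_sub_cancel_left, sub_self, hD,
    smul_eq_mul]
  field_simp
  ring

lemma hasDerivAt_add_const_of_transport {w a : ℝ → ℝ → ℝ} {X : ℝ → ℝ} {e t : ℝ}
    (hw : DifferentiableAt ℝ (uncurry w) (X t + e, t))
    (htransport : timeDeriv w (X t + e) t + a (X t + e) t * spaceDeriv w (X t + e) t = 0)
    (hX : HasDerivAt X (a (X t) t) t) :
    HasDerivAt (fun s => w (X s + e) s)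
      (-(spaceDeriv w (X t + e) t * (a (X t + e) t - a (X t) t))) t :=
  (hasDerivAt_along_curve (X := fun s => X s + e) hw (hX.add_const e)).congr_deriv
    (by linear_combination htransport)

lemma hasDerivAt_spaceDifferenceQuotient_of_transport {w a : ℝ → ℝ → ℝ} {X : ℝ → ℝ} {e t : ℝ}
    (hw : DifferentiableAt ℝ (uncurry w) (X t, t))
    (hwe : DifferentiableAt ℝ (uncurry w) (X t + e, t))
    (htransport : timeDeriv w (X t) t + a (X t) t * spaceDeriv w (X t) t = 0)
    (htransport_e : timeDeriv w (X t + e) t + a (X t + e) t * spaceDeriv w (X t + e) t = 0)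
    (hX : HasDerivAt X (a (X t) t) t) :
    HasDerivAt (fun s => e⁻¹ * (w (X s + e) s - w (X s) s))
      (-(spaceDeriv w (X t + e) t * (e⁻¹ * (a (X t + e) t - a (X t) t)))) t := by
  have hmoved := hasDerivAt_add_const_of_transport hwe htransport_e hX
  have hfixed := hasDerivAt_add_const_of_transport (w := w) (a := a) (e := 0)
    (by simpa only [add_zero] using hw) (by simpa only [add_zero] using htransport) hX
  simp only [add_zero] at hfixed
  exact ((hmoved.sub hfixed).const_mul e⁻¹).congr_deriv (by ring)

lemma hasDerivAt_spaceDeriv_of_transport {w a : ℝ → ℝ → ℝ} {X : ℝ → ℝ} {t : ℝ}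
    (hw : ContDiffAt ℝ 1 (uncurry w) (X t, t)) (ha : ContDiffAt ℝ 1 (uncurry a) (X t, t))
    (htransport : ∀ᶠ q in 𝓝 (X t, t),
      timeDeriv w q.1 q.2 + a q.1 q.2 * spaceDeriv w q.1 q.2 = 0)
    (hX : ∀ᶠ s in 𝓝 t, HasDerivAt X (a (X s) s) s) :
    HasDerivAt (fun s => spaceDeriv w (X s) s)
      (-(spaceDeriv w (X t) t * spaceDeriv a (X t) t)) t := by
  -- `w` has no second derivatives to differentiate the equation with; its space difference
  -- quotients are differentiable along the characteristic, and pass to the limit.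
  have hXt : ContinuousAt X t := hX.self_of_nhds.continuousAt
  have hpath : Tendsto (fun s => (X s, s)) (𝓝 t) (𝓝 (X t, t)) := hXt.tendsto.prodMk_nhds tendsto_id
  have hshift := tendsto_prodMk_add_of_continuousAt hXt
  have hregular := (hw.eventually (by simp)).and htransport
  have hquotient : ∀ᶠ q : ℝ × ℝ in 𝓝[≠] 0 ×ˢ 𝓝 t,
      HasDerivAt (fun s => q.1⁻¹ * (w (X s + q.1) s - w (X s) s))
        (-(spaceDeriv w (X q.2 + q.1) q.2 * (q.1⁻¹ * (a (X q.2 + q.1) q.2 - a (X q.2) q.2))))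
        q.2 := by
    filter_upwards [hshift.eventually hregular, tendsto_snd.eventually (hpath.eventually hregular),
      tendsto_snd.eventually hX] with q hq hq₀ hXq
    exact hasDerivAt_spaceDifferenceQuotient_of_transport (hq₀.1.differentiableAt one_ne_zero)
      (hq.1.differentiableAt one_ne_zero) hq₀.2 hq.2 hXq
  have hlimit : Tendsto (fun q : ℝ × ℝ =>
      (-(spaceDeriv w (X q.2) q.2 * spaceDeriv a (X q.2) q.2),
        -(spaceDeriv w (X q.2 + q.1) q.2 * (q.1⁻¹ * (a (X q.2 + q.1) q.2 - a (X q.2) q.2)))))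
      (𝓝[≠] 0 ×ˢ 𝓝 t) (𝓝 (-(spaceDeriv w (X t) t * spaceDeriv a (X t) t),
        -(spaceDeriv w (X t) t * spaceDeriv a (X t) t))) := by
    have hwx := (continuousAt_spaceDeriv hw).tendsto
    have hax := (continuousAt_spaceDeriv ha).tendsto
    have hfixed := hpath.comp (tendsto_snd (f := 𝓝[≠] (0 : ℝ)))
    exact ((hwx.comp hfixed).mul (hax.comp hfixed)).neg.prodMk_nhds
      ((hwx.comp hshift).mul (tendsto_spaceDifferenceQuotient ha hXt)).neg
  refine hasDerivAt_of_tendstoUniformlyOnFilter (l := 𝓝[≠] (0 : ℝ))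
    (f := fun e s => e⁻¹ * (w (X s + e) s - w (X s) s))
    (f' := fun e s => -(spaceDeriv w (X s + e) s * (e⁻¹ * (a (X s + e) s - a (X s) s))))
    (g' := fun s => -(spaceDeriv w (X s) s * spaceDeriv a (X s) s))
    (tendstoUniformlyOnFilter_iff_tendsto.2 (hlimit.trans (nhds_le_uniformity _))) hquotient ?_
  filter_upwards [hpath.eventually hregular, hX] with s hs hXs
  exact (tendsto_spaceDifferenceQuotient hs.1 hXs.continuousAt).comp
    (tendsto_id.prodMk tendsto_const_nhds)

end Calculus

/-! ### Convex pressure laws -/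

/-- The Lagrangian sound speed `c = √(-p')`. -/
noncomputable def soundSpeed (p : ℝ → ℝ) (v : ℝ) : ℝ := √(-deriv p v)

/-- The function `∫_v^1 c` of the specific volume `v`, whose sum with and difference from the
velocity are the Riemann invariants. -/
noncomputable def soundPotential (p : ℝ → ℝ) (v : ℝ) : ℝ := ∫ ξ in v..1, soundSpeed p ξ

/-- A `C²` pressure law on `(0, ∞)`, strictly decreasing and convex in the specific volume. -/
structure IsConvexPressure (p : ℝ → ℝ) : Prop where
  contDiffOn : ContDiffOn ℝ 2 p (Ioi 0)
  deriv_neg : ∀ v ∈ Ioi (0 : ℝ), deriv p v < 0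
  deriv_deriv_nonneg : ∀ v ∈ Ioi (0 : ℝ), 0 ≤ deriv (deriv p) v

namespace IsConvexPressure

variable {p : ℝ → ℝ} (hp : IsConvexPressure p) {v : ℝ}
include hp

lemma soundSpeed_pos (hv : 0 < v) : 0 < soundSpeed p v :=
  Real.sqrt_pos.2 (neg_pos.2 (hp.deriv_neg v hv))

lemma contDiffOn_deriv : ContDiffOn ℝ 1 (deriv p) (Ioi 0) :=
  hp.contDiffOn.deriv_of_isOpen isOpen_Ioi (by norm_num)

lemma contDiffOn_soundSpeed : ContDiffOn ℝ 1 (soundSpeed p) (Ioi 0) :=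
  hp.contDiffOn_deriv.neg.sqrt fun v hv => (neg_pos.2 (hp.deriv_neg v hv)).ne'

lemma hasDerivAt_soundSpeed (hv : 0 < v) :
    HasDerivAt (soundSpeed p) (deriv (soundSpeed p) v) v :=
  ((hp.contDiffOn_soundSpeed.contDiffAt (Ioi_mem_nhds hv)).differentiableAt
    one_ne_zero).hasDerivAt

lemma deriv_soundSpeed_nonpos (hv : 0 < v) : deriv (soundSpeed p) v ≤ 0 := by
  have hderiv : HasDerivAt (deriv p) (deriv (deriv p) v) v :=
    ((hp.contDiffOn_deriv.contDiffAt (Ioi_mem_nhds hv)).differentiableAt one_ne_zero).hasDerivAt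
  have hc : HasDerivAt (soundSpeed p) (-deriv (deriv p) v / (2 * √(-deriv p v))) v :=
    hderiv.neg.sqrt (neg_pos.2 (hp.deriv_neg v hv)).ne'
  rw [hc.deriv]
  exact div_nonpos_of_nonpos_of_nonneg (neg_nonpos.2 (hp.deriv_deriv_nonneg v hv)) (by positivity)

lemma antitoneOn_soundSpeed : AntitoneOn (soundSpeed p) (Ioi 0) :=
  antitoneOn_of_deriv_nonpos (convex_Ioi 0) hp.contDiffOn_soundSpeed.continuousOn
    (hp.contDiffOn_soundSpeed.differentiableOn one_ne_zero |>.mono interior_subset)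
    fun _ hv => hp.deriv_soundSpeed_nonpos (interior_subset hv)

lemma hasDerivAt_soundPotential (hv : 0 < v) :
    HasDerivAt (soundPotential p) (-soundSpeed p v) v := by
  have hcont := hp.contDiffOn_soundSpeed.continuousOn
  exact intervalIntegral.integral_hasDerivAt_left
    (hcont.mono (ordConnected_Ioi.uIcc_subset hv (mem_Ioi.2 one_pos))).intervalIntegrable
    (hcont.stronglyMeasurableAtFilter isOpen_Ioi v hv) (hcont.continuousAt (Ioi_mem_nhds hv))

lemma contDiffOn_soundPotential : ContDiffOn ℝ 1 (soundPotential p) (Ioi 0) :=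
  (contDiffOn_one_iff_derivWithin isOpen_Ioi.uniqueDiffOn).2
    ⟨fun _ hv => (hp.hasDerivAt_soundPotential hv).differentiableAt.differentiableWithinAt,
      hp.contDiffOn_soundSpeed.continuousOn.neg.congr fun v hv => by
        rw [derivWithin_of_isOpen isOpen_Ioi hv, (hp.hasDerivAt_soundPotential hv).deriv]; rfl⟩

lemma strictAntiOn_soundPotential : StrictAntiOn (soundPotential p) (Ioi 0) :=
  strictAntiOn_of_hasDerivWithinAt_neg (convex_Ioi 0) hp.contDiffOn_soundPotential.continuousOn
    (fun _ hv => (hp.hasDerivAt_soundPotential (interior_subset hv)).hasDerivWithinAt)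
    fun _ hv => neg_neg_of_pos (hp.soundSpeed_pos (interior_subset hv))

lemma mul_soundSpeed_le (hv : 0 < v) :
    v * soundSpeed p v ≤ 2 * (soundPotential p (v / 2) - soundPotential p v) := by
  have hpos : ∀ ξ ∈ Icc (v / 2) v, 0 < ξ := fun ξ hξ => by linarith [hξ.1]
  obtain ⟨ξ, hξ, hslope⟩ := exists_hasDerivAt_eq_slope (soundPotential p) (fun ξ => -soundSpeed p ξ)
    (half_lt_self hv) (hp.contDiffOn_soundPotential.continuousOn.mono hpos)
    fun ξ hξ => hp.hasDerivAt_soundPotential (hpos ξ (Ioo_subset_Icc_self hξ))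
  have hc := hp.antitoneOn_soundSpeed (hpos ξ (Ioo_subset_Icc_self hξ)) hv hξ.2.le
  have hhalf : v - v / 2 ≠ 0 := by linarith
  rw [eq_div_iff hhalf] at hslope
  linarith [mul_le_mul_of_nonneg_left hc hv.le]

lemma exists_soundPotential_half_le (B : ℝ) :
    ∃ A, ∀ v, 0 < v → |soundPotential p v| ≤ B → soundPotential p (v / 2) ≤ A := by
  by_cases hbound : ∀ v, 0 < v → soundPotential p v ≤ B
  · exact ⟨B, fun v hv _ => hbound (v / 2) (half_pos hv)⟩
  · push Not at hbound
    obtain ⟨m, hm, hBm⟩ := hbound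
    refine ⟨soundPotential p (m / 2), fun v hv hvB => ?_⟩
    have hmv : m < v := (hp.strictAntiOn_soundPotential.lt_iff_gt hv hm).1
      ((le_of_abs_le hvB).trans_lt hBm)
    exact hp.strictAntiOn_soundPotential.antitoneOn (half_pos hm) (half_pos hv) (by linarith)

lemma exists_mul_soundSpeed_le (B : ℝ) :
    ∃ K, ∀ v, 0 < v → |soundPotential p v| ≤ B → v * soundSpeed p v ≤ K := by
  obtain ⟨A, hA⟩ := hp.exists_soundPotential_half_le B
  refine ⟨2 * (A + B), fun v hv hvB => (hp.mul_soundSpeed_le hv).trans ?_⟩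
  linarith [hA v hv hvB, neg_le_of_abs_le hvB]

end IsConvexPressure

/-! ### Riemann invariants along characteristics -/

/-- The Riemann invariant `u + σ ∫_τ^1 c`: `s` for `σ = 1` and `r` for `σ = -1`. -/
noncomputable def riemannInvariant (p : ℝ → ℝ) (τ u : ℝ → ℝ → ℝ) (σ x t : ℝ) : ℝ :=
  u x t + σ * soundPotential p (τ x t)

/-- The weighted space derivative `√c w_x` of a Riemann invariant `w`: `y` for `σ = 1` and `q` for
`σ = -1`. -/
noncomputable def gradientVariable (p : ℝ → ℝ) (τ u : ℝ → ℝ → ℝ) (σ x t : ℝ) : ℝ :=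
  √(soundSpeed p (τ x t)) * spaceDeriv (riemannInvariant p τ u σ) x t

/-- The larger of `|s|` and `|r|`. -/
noncomputable def riemannMagnitude (p : ℝ → ℝ) (τ u : ℝ → ℝ → ℝ) (x t : ℝ) : ℝ :=
  |u x t| + |soundPotential p (τ x t)|

/-- Some curve arrives at `(x, t)` with speed `c`, and shortly before on it `f` is at least
`f x t`. -/
def DecreasesAlongCharacteristic (f : ℝ → ℝ → ℝ) (c x t : ℝ) : Prop :=
  ∃ (X : ℝ → ℝ) (v : ℝ), X t = x ∧ HasDerivAt X v t ∧ |v| = c ∧ ∀ᶠ s in 𝓝[<] t, f x t ≤ f (X s) s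

lemma exists_riemannMagnitude_eq_mul (p : ℝ → ℝ) (τ u : ℝ → ℝ → ℝ) (x t : ℝ) :
    ∃ σ δ : ℝ, |σ| = 1 ∧ |δ| = 1 ∧
      riemannMagnitude p τ u x t = δ * riemannInvariant p τ u σ x t := by
  have hsign : ∀ a : ℝ, ∃ δ : ℝ, |δ| = 1 ∧ |a| = δ * a := fun a => by
    rcases abs_choice a with h | h
    exacts [⟨1, by simp, by simp [h]⟩, ⟨-1, by simp, by simp [h]⟩]
  obtain ⟨δ, hδ, hu⟩ := hsign (u x t)
  obtain ⟨ε, hε, hφ⟩ := hsign (soundPotential p (τ x t))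
  have hδδ : δ * δ = 1 := by rw [← abs_mul_abs_self, hδ, one_mul]
  refine ⟨δ * ε, δ, by rw [abs_mul, hδ, hε, one_mul], hδ, ?_⟩
  simp only [riemannMagnitude, riemannInvariant, hu, hφ]
  linear_combination -(ε * soundPotential p (τ x t)) * hδδ

lemma mul_riemannInvariant_le_riemannMagnitude {σ δ : ℝ} (hσ : |σ| = 1) (hδ : |δ| = 1)
    (p : ℝ → ℝ) (τ u : ℝ → ℝ → ℝ) (x t : ℝ) :
    δ * riemannInvariant p τ u σ x t ≤ riemannMagnitude p τ u x t :=
  calc δ * riemannInvariant p τ u σ x t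
      ≤ |riemannInvariant p τ u σ x t| := (le_abs_self _).trans (by rw [abs_mul, hδ, one_mul])
    _ ≤ |u x t| + |σ * soundPotential p (τ x t)| := abs_add_le _ _
    _ = riemannMagnitude p τ u x t := by rw [abs_mul, hσ, one_mul, riemannMagnitude]

namespace GenPSysSol

variable {p : ℝ → ℝ} {τ u : ℝ → ℝ → ℝ} {I : Set ℝ} {σ x t : ℝ}

section Regularity

variable (hsol : GenPSysSol p I 1 τ u)
include hsol

lemma specificVolume_pos (x : ℝ) (ht : t ∈ I) : 0 < τ x t := hsol.1 x t ht

lemma contDiffOn_specificVolume : ContDiffOn ℝ 1 (uncurry τ) (univ ×ˢ I) := hsol.2.1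

lemma contDiffOn_velocity : ContDiffOn ℝ 1 (uncurry u) (univ ×ˢ I) := hsol.2.2.1

lemma hasDerivAt_specificVolume (x : ℝ) (ht : t ∈ I) :
    HasDerivAt (fun x' => τ x' t) (spaceDeriv τ x t) x :=
  hasDerivAt_spaceDeriv (hsol.contDiffOn_specificVolume.differentiableOn one_ne_zero) ht

lemma timeDeriv_specificVolume (x : ℝ) (ht : t ∈ I) : timeDeriv τ x t = spaceDeriv u x t :=
  sub_eq_zero.1 (hsol.2.2.2.1 x t ht)

lemma contDiffOn_comp_specificVolume {g : ℝ → ℝ} (hg : ContDiffOn ℝ 1 g (Ioi 0)) :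
    ContDiffOn ℝ 1 (uncurry fun x t => g (τ x t)) (univ ×ˢ I) :=
  hg.comp hsol.contDiffOn_specificVolume fun q hq => hsol.specificVolume_pos q.1 hq.2

end Regularity

variable (hp : IsConvexPressure p) (hsol : GenPSysSol p I 1 τ u)
include hp hsol

lemma contDiffOn_riemannInvariant (σ : ℝ) :
    ContDiffOn ℝ 1 (uncurry (riemannInvariant p τ u σ)) (univ ×ˢ I) :=
  hsol.contDiffOn_velocity.add
    (contDiffOn_const.mul (hsol.contDiffOn_comp_specificVolume hp.contDiffOn_soundPotential))

lemma continuousOn_riemannMagnitude :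
    ContinuousOn (uncurry (riemannMagnitude p τ u)) (univ ×ˢ I) :=
  hsol.contDiffOn_velocity.continuousOn.abs.add
    (hsol.contDiffOn_comp_specificVolume hp.contDiffOn_soundPotential).continuousOn.abs

lemma continuousOn_gradientVariable (hI : UniqueDiffOn ℝ I) (σ : ℝ) :
    ContinuousOn (uncurry (gradientVariable p τ u σ)) (univ ×ˢ I) :=
  (hsol.contDiffOn_comp_specificVolume hp.contDiffOn_soundSpeed).continuousOn.sqrt.mul
    (continuousOn_spaceDeriv hI (hsol.contDiffOn_riemannInvariant hp σ))

lemma spaceDeriv_riemannInvariant (ht : t ∈ I) :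
    spaceDeriv (riemannInvariant p τ u σ) x t
      = spaceDeriv u x t - σ * (soundSpeed p (τ x t) * spaceDeriv τ x t) := by
  have hτ := hsol.hasDerivAt_specificVolume x ht
  have hu := hasDerivAt_spaceDeriv (x := x)
    (hsol.contDiffOn_velocity.differentiableOn one_ne_zero) ht
  have hφ := (hp.hasDerivAt_soundPotential (hsol.specificVolume_pos x ht)).comp x hτ
  refine (hu.add (hφ.const_mul σ)).deriv.trans ?_
  ring

lemma timeDeriv_velocity (x : ℝ) (ht : t ∈ I) :
    timeDeriv u x t = soundSpeed p (τ x t) ^ 2 * spaceDeriv τ x t := by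
  have hv := hsol.specificVolume_pos x ht
  have hτ := hsol.hasDerivAt_specificVolume x ht
  have hpder : HasDerivAt p (deriv p (τ x t)) (τ x t) :=
    ((hp.contDiffOn.contDiffAt (Ioi_mem_nhds hv)).differentiableAt two_ne_zero).hasDerivAt
  have hpx : deriv (fun x' => p (τ x' t)) x = deriv p (τ x t) * spaceDeriv τ x t :=
    (hpder.comp x hτ).deriv
  have hc : soundSpeed p (τ x t) ^ 2 = -deriv p (τ x t) :=
    Real.sq_sqrt (neg_pos.2 (hp.deriv_neg _ hv)).le
  rw [hc, neg_mul, ← hpx]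
  exact eq_neg_of_add_eq_zero_left (hsol.2.2.2.2 x t ht)

lemma timeDeriv_riemannInvariant (hI : I ∈ 𝓝 t) (σ x : ℝ) :
    timeDeriv (riemannInvariant p τ u σ) x t = timeDeriv u x t
      - σ * (soundSpeed p (τ x t) * timeDeriv τ x t) := by
  have hmem : univ ×ˢ I ∈ 𝓝 (x, t) := prod_mem_nhds univ_mem hI
  have hτ := hasDerivAt_timeDeriv
    ((hsol.contDiffOn_specificVolume.contDiffAt hmem).differentiableAt one_ne_zero)
  have hu := hasDerivAt_timeDeriv
    ((hsol.contDiffOn_velocity.contDiffAt hmem).differentiableAt one_ne_zero)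
  have hφ := (hp.hasDerivAt_soundPotential
    (hsol.specificVolume_pos x (mem_of_mem_nhds hI))).comp t hτ
  refine (hu.add (hφ.const_mul σ)).deriv.trans ?_
  ring

lemma riemannInvariant_transport (hσ : |σ| = 1) (hI : I ∈ 𝓝 t) (x : ℝ) :
    timeDeriv (riemannInvariant p τ u σ) x t
      + σ * soundSpeed p (τ x t) * spaceDeriv (riemannInvariant p τ u σ) x t = 0 := by
  have ht := mem_of_mem_nhds hI
  have hσσ : σ ^ 2 = 1 := by rw [← sq_abs, hσ, one_pow]
  rw [hsol.timeDeriv_riemannInvariant hp hI, hsol.spaceDeriv_riemannInvariant hp ht,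
    hsol.timeDeriv_velocity hp x ht, hsol.timeDeriv_specificVolume x ht]
  linear_combination -(soundSpeed p (τ x t) ^ 2 * spaceDeriv τ x t) * hσσ

lemma exists_characteristic (hI : I ∈ 𝓝 t) (σ x : ℝ) : ∃ X : ℝ → ℝ, X t = x ∧
    ∀ᶠ s in 𝓝 t, HasDerivAt X (σ * soundSpeed p (τ (X s) s)) s :=
  exists_hasDerivAt_of_contDiffAt (a := fun x t => σ * soundSpeed p (τ x t)) <|
    contDiffAt_const.mul <|
      (hsol.contDiffOn_comp_specificVolume hp.contDiffOn_soundSpeed).contDiffAt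
        (prod_mem_nhds univ_mem hI)

section Characteristic

variable (hσ : |σ| = 1) (hI : I ∈ 𝓝 t)
include hσ hI

lemma hasDerivAt_riemannInvariant {X : ℝ → ℝ}
    (hX : HasDerivAt X (σ * soundSpeed p (τ (X t) t)) t) :
    HasDerivAt (fun s => riemannInvariant p τ u σ (X s) s) 0 t :=
  (hasDerivAt_along_curve (((hsol.contDiffOn_riemannInvariant hp σ).contDiffAt
    (prod_mem_nhds univ_mem hI)).differentiableAt one_ne_zero) hX).congr_deriv
    (hsol.riemannInvariant_transport hp hσ hI (X t))

lemma hasDerivAt_spaceDeriv_riemannInvariant {X : ℝ → ℝ}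
    (hX : ∀ᶠ s in 𝓝 t, HasDerivAt X (σ * soundSpeed p (τ (X s) s)) s) :
    HasDerivAt (fun s => spaceDeriv (riemannInvariant p τ u σ) (X s) s)
      (-(spaceDeriv (riemannInvariant p τ u σ) (X t) t
        * (σ * (deriv (soundSpeed p) (τ (X t) t) * spaceDeriv τ (X t) t)))) t := by
  have ht := mem_of_mem_nhds hI
  have hmem : univ ×ˢ I ∈ 𝓝 (X t, t) := prod_mem_nhds univ_mem hI
  have hc : HasDerivAt (fun x => soundSpeed p (τ x t))
      (deriv (soundSpeed p) (τ (X t) t) * spaceDeriv τ (X t) t) (X t) :=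
    (hp.hasDerivAt_soundSpeed (hsol.specificVolume_pos _ ht)).comp (h := fun x => τ x t) (X t)
      (hsol.hasDerivAt_specificVolume (X t) ht)
  have hspeed : spaceDeriv (fun x t => σ * soundSpeed p (τ x t)) (X t) t
      = σ * (deriv (soundSpeed p) (τ (X t) t) * spaceDeriv τ (X t) t) := (hc.const_mul σ).deriv
  rw [← hspeed]
  refine hasDerivAt_spaceDeriv_of_transport
    ((hsol.contDiffOn_riemannInvariant hp σ).contDiffAt hmem)
    (contDiffAt_const.mul
      ((hsol.contDiffOn_comp_specificVolume hp.contDiffOn_soundSpeed).contDiffAt hmem)) ?_ hX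
  filter_upwards [continuousAt_snd.eventually (eventually_mem_nhds_iff.2 hI)] with q hq
  exact hsol.riemannInvariant_transport hp hσ hq q.1

lemma hasDerivAt_gradientVariable {X : ℝ → ℝ}
    (hX : ∀ᶠ s in 𝓝 t, HasDerivAt X (σ * soundSpeed p (τ (X s) s)) s) :
    HasDerivAt (fun s => gradientVariable p τ u σ (X s) s)
      (deriv (soundSpeed p) (τ (X t) t) * spaceDeriv (riemannInvariant p τ u σ) (X t) t ^ 2
        / (2 * √(soundSpeed p (τ (X t) t)))) t := by
  have ht := mem_of_mem_nhds hI
  have hv := hsol.specificVolume_pos (X t) ht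
  have hc := hp.soundSpeed_pos hv
  have hτ := hasDerivAt_along_curve ((hsol.contDiffOn_specificVolume.contDiffAt
    (prod_mem_nhds univ_mem hI)).differentiableAt one_ne_zero) hX.self_of_nhds
  have hweight := ((hp.hasDerivAt_soundSpeed hv).comp (h := fun s => τ (X s) s) t hτ).sqrt hc.ne'
  have hwx := hsol.hasDerivAt_spaceDeriv_riemannInvariant hp hσ hI hX
  refine (hweight.mul hwx).congr_deriv ?_
  have hsqrt : √(soundSpeed p (τ (X t) t)) ≠ 0 := (Real.sqrt_pos.2 hc).ne'
  have hsq : √(soundSpeed p (τ (X t) t)) ^ 2 = soundSpeed p (τ (X t) t) := Real.sq_sqrt hc.le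
  rw [hsol.timeDeriv_specificVolume _ ht, hsol.spaceDeriv_riemannInvariant hp ht]
  simp only [comp_apply]
  field_simp [hsqrt]
  rw [hsq]
  ring

lemma decreasesAlongCharacteristic_of_hasDerivAt {f f' : ℝ → ℝ → ℝ}
    (hf : ∀ (X : ℝ → ℝ) (s : ℝ), I ∈ 𝓝 s →
      (∀ᶠ r in 𝓝 s, HasDerivAt X (σ * soundSpeed p (τ (X r) r)) r) →
      HasDerivAt (fun r => f (X r) r) (f' (X s) s) s)
    (hf' : ∀ x, ∀ s ∈ I, f' x s ≤ 0) (x : ℝ) :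
    DecreasesAlongCharacteristic f (soundSpeed p (τ x t)) x t := by
  obtain ⟨X, rfl, hX⟩ := hsol.exists_characteristic hp hI σ x
  have hIev := eventually_mem_nhds_iff.2 hI
  refine ⟨X, _, rfl, hX.self_of_nhds, ?_, eventually_le_left_of_hasDerivAt_nonpos
    (hIev.and hX.eventually_nhds |>.mono fun s hs => hf X s hs.1 hs.2)
    (hIev.mono fun s hs => hf' (X s) s (mem_of_mem_nhds hs))⟩
  rw [abs_mul, hσ, one_mul,
    abs_of_pos (hp.soundSpeed_pos (hsol.specificVolume_pos _ (mem_of_mem_nhds hI)))]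

lemma gradientVariable_decreasesAlongCharacteristic (x : ℝ) :
    DecreasesAlongCharacteristic (gradientVariable p τ u σ) (soundSpeed p (τ x t)) x t :=
  hsol.decreasesAlongCharacteristic_of_hasDerivAt hp hσ hI
    (f' := fun x t => deriv (soundSpeed p) (τ x t)
      * spaceDeriv (riemannInvariant p τ u σ) x t ^ 2 / (2 * √(soundSpeed p (τ x t))))
    (fun _ _ hs hX => hsol.hasDerivAt_gradientVariable hp hσ hs hX)
    (fun x _ hs => div_nonpos_of_nonpos_of_nonneg (mul_nonpos_of_nonpos_of_nonneg
      (hp.deriv_soundSpeed_nonpos (hsol.specificVolume_pos x hs)) (sq_nonneg _)) (by positivity)) x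

lemma riemannInvariant_decreasesAlongCharacteristic (δ x : ℝ) :
    DecreasesAlongCharacteristic (fun x t => δ * riemannInvariant p τ u σ x t)
      (soundSpeed p (τ x t)) x t :=
  hsol.decreasesAlongCharacteristic_of_hasDerivAt hp hσ hI (f' := 0)
    (fun _ _ hs hX => ((hsol.hasDerivAt_riemannInvariant hp hσ hs hX.self_of_nhds).const_mul
      δ).congr_deriv (mul_zero δ)) (fun _ _ _ => le_rfl) x

end Characteristic

lemma riemannMagnitude_decreasesAlongCharacteristic (hI : I ∈ 𝓝 t) (x : ℝ) :
    DecreasesAlongCharacteristic (riemannMagnitude p τ u) (soundSpeed p (τ x t)) x t := by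
  obtain ⟨σ, δ, hσ, hδ, heq⟩ := exists_riemannMagnitude_eq_mul p τ u x t
  obtain ⟨X, v, hXt, hX, hv, hdecr⟩ :=
    hsol.riemannInvariant_decreasesAlongCharacteristic hp hσ hI δ x
  refine ⟨X, v, hXt, hX, hv, hdecr.mono fun s hs => ?_⟩
  exact heq.trans_le (hs.trans (mul_riemannInvariant_le_riemannMagnitude hσ hδ p τ u (X s) s))

end GenPSysSol

/-! ### The Eulerian coordinate -/

/-- A primitive `z` of the closed form `τ dx + u dt` on `ℝ × I`: the position in space of the fluid
particle whose Lagrangian label is `x`. -/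
def IsEulerianCoordinate (τ u : ℝ → ℝ → ℝ) (I : Set ℝ) (z : ℝ → ℝ → ℝ) : Prop :=
  ∀ q ∈ univ ×ˢ I, HasFDerivWithinAt (uncurry z)
    (uncurry τ q • ContinuousLinearMap.fst ℝ ℝ ℝ + uncurry u q • ContinuousLinearMap.snd ℝ ℝ ℝ)
    (univ ×ˢ I) q

namespace GenPSysSol

variable {p : ℝ → ℝ} {τ u : ℝ → ℝ → ℝ} {I : Set ℝ}

lemma fderivWithin_time_specificVolume_eq (hsol : GenPSysSol p I 1 τ u) (hI : Convex ℝ I)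
    (hI' : (interior I).Nonempty) : EqOn
      (fun q => fderivWithin ℝ (uncurry τ) (univ ×ˢ I) q (0, 1))
      (fun q => fderivWithin ℝ (uncurry u) (univ ×ˢ I) q (1, 0)) (univ ×ˢ I) := by
  have hunique : UniqueDiffOn ℝ (univ ×ˢ I : Set (ℝ × ℝ)) :=
    uniqueDiffOn_univ.prod (uniqueDiffOn_convex hI hI')
  refine EqOn.of_subset_closure (s := univ ×ˢ interior I) ?_
    ((hsol.contDiffOn_specificVolume.continuousOn_fderivWithin hunique le_rfl).clm_apply
      continuousOn_const)
    ((hsol.contDiffOn_velocity.continuousOn_fderivWithin hunique le_rfl).clm_apply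
      continuousOn_const) (prod_mono_right interior_subset) ?_
  · rintro ⟨x, t⟩ ⟨-, ht⟩
    have hmem : univ ×ˢ I ∈ 𝓝 (x, t) := prod_mem_nhds univ_mem (mem_interior_iff_mem_nhds.1 ht)
    simp only [fderivWithin_of_mem_nhds hmem]
    rw [← timeDeriv_eq_fderiv
        ((hsol.contDiffOn_specificVolume.contDiffAt hmem).differentiableAt one_ne_zero),
      ← spaceDeriv_eq_fderiv
        ((hsol.contDiffOn_velocity.contDiffAt hmem).differentiableAt one_ne_zero),
      hsol.timeDeriv_specificVolume x (interior_subset ht)]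
  · rw [closure_prod_eq, closure_univ, hI.closure_interior_eq_closure_of_nonempty_interior hI']
    exact prod_mono_right subset_closure

lemma exists_isEulerianCoordinate (hsol : GenPSysSol p I 1 τ u) (hI : Convex ℝ I)
    (hI' : (interior I).Nonempty) : ∃ z, IsEulerianCoordinate τ u I z := by
  have hτ : ∀ q ∈ univ ×ˢ I, HasFDerivWithinAt (uncurry τ) _ _ q := fun q hq =>
    (hsol.contDiffOn_specificVolume.differentiableOn one_ne_zero q hq).hasFDerivWithinAt
  have hu : ∀ q ∈ univ ×ˢ I, HasFDerivWithinAt (uncurry u) _ _ q := fun q hq =>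
    (hsol.contDiffOn_velocity.differentiableOn one_ne_zero q hq).hasFDerivWithinAt
  refine (Convex.exists_forall_hasFDerivWithinAt_of_hasFDerivWithinAt_symmetric
    (convex_univ.prod hI)
    (fun q hq => ((hτ q hq).smul_const (ContinuousLinearMap.fst ℝ ℝ ℝ)).add
      ((hu q hq).smul_const (ContinuousLinearMap.snd ℝ ℝ ℝ))) fun q hq v _ w _ => ?_).imp'
    curry fun _ hf => hf
  have hclosed := hsol.fderivWithin_time_specificVolume_eq hI hI' hq
  simp only [add_apply, ContinuousLinearMap.smulRight_apply,
    FunLike.coe_smul, Pi.smul_apply, ContinuousLinearMap.coe_fst', ContinuousLinearMap.coe_snd',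
    smul_eq_mul] at hclosed ⊢
  simp only [clm_prod_apply_eq_add _ v, clm_prod_apply_eq_add _ w]
  linear_combination (v.2 * w.1 - v.1 * w.2) * hclosed

end GenPSysSol

namespace IsEulerianCoordinate

variable {τ u z : ℝ → ℝ → ℝ} {I : Set ℝ} {K L x t : ℝ} (hz : IsEulerianCoordinate τ u I z)
include hz

protected lemma continuousOn : ContinuousOn (uncurry z) (univ ×ˢ I) :=
  fun q hq => (hz q hq).continuousWithinAt

lemma hasDerivAt_space (x : ℝ) (ht : t ∈ I) : HasDerivAt (fun x' => z x' t) (τ x t) x := by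
  simpa using hasDerivAt_of_hasFDerivWithinAt_univ_prod (hz (x, t) ⟨mem_univ x, ht⟩) ht

protected lemma strictMono (ht : t ∈ I) (hτ : ∀ x, 0 < τ x t) : StrictMono fun x => z x t :=
  strictMono_of_hasDerivAt_pos (fun x => hz.hasDerivAt_space x ht) hτ

lemma exists_lt_and_lt_neg {m : ℝ} (ht : t ∈ I) (hm : 0 < m) (hτ : ∀ x, m ≤ τ x t) (L : ℝ) :
    ∃ R, 0 ≤ R ∧ L < z R t ∧ z (-R) t < -L := by
  have hgrowth : ∀ a b, a ≤ b → m * (b - a) ≤ z b t - z a t := fun a b hab =>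
    mul_sub_le_image_sub_of_le_deriv (fun x => (hz.hasDerivAt_space x ht).differentiableAt)
      (fun x => (hτ x).trans_eq (hz.hasDerivAt_space x ht).deriv.symm) hab
  set R := (|L| + |z 0 t| + 1) / m
  have hmR : m * R = |L| + |z 0 t| + 1 := mul_div_cancel₀ _ hm.ne'
  have hR0 : 0 ≤ R := by positivity
  refine ⟨R, hR0, ?_, ?_⟩
  · linarith [hgrowth 0 R hR0, le_abs_self L, neg_abs_le (z 0 t)]
  · linarith [hgrowth (-R) 0 (by linarith), le_abs_self L, le_abs_self (z 0 t)]

lemma hasDerivAt_along_curve {X : ℝ → ℝ} {v : ℝ} (hI : I ∈ 𝓝 t) (hX : HasDerivAt X v t) :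
    HasDerivAt (fun s => z (X s) s) (u (X t) t + τ (X t) t * v) t := by
  have hfderiv := (hz (X t, t) ⟨mem_univ _, mem_of_mem_nhds hI⟩).hasFDerivAt
    (prod_mem_nhds univ_mem hI)
  refine (hfderiv.comp_hasDerivAt (f := fun s => (X s, s)) t
    (hX.prodMk (hasDerivAt_id t))).congr_deriv ?_
  simp [add_comm]

lemma eventually_abs_le_left {X : ℝ → ℝ} {v : ℝ} (hI : I ∈ 𝓝 t) (hX : HasDerivAt X v t)
    (hv : |u (X t) t + τ (X t) t * v| < K) (hcone : |z (X t) t| ≤ L - K * t) :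
    ∀ᶠ s in 𝓝[<] t, |z (X s) s| ≤ L - K * s := by
  have hzX := hz.hasDerivAt_along_curve hI hX
  have hK := (hasDerivAt_id t).const_mul K
  obtain ⟨hvl, hvr⟩ := abs_lt.1 hv
  obtain ⟨hl, hr⟩ := abs_le.1 hcone
  filter_upwards [eventually_lt_left_of_hasDerivAt_pos (hK.add hzX) (by linarith),
    eventually_lt_left_of_hasDerivAt_pos (hK.sub hzX) (by linarith)] with s hs hs'
  simp only [id_eq, Pi.add_apply, Pi.sub_apply] at hs hs'
  exact abs_le.2 ⟨by linarith, by linarith⟩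

lemma exists_earlier_le {f : ℝ → ℝ → ℝ} {c : ℝ} (hI : I ∈ 𝓝 t) (ht : 0 < t) (hτ : 0 ≤ τ x t)
    (hf : DecreasesAlongCharacteristic f c x t) (hspeed : |u x t| + τ x t * c < K)
    (hcone : |z x t| ≤ L - K * t) :
    ∃ x', ∃ s ∈ Ico 0 t, |z x' s| ≤ L - K * s ∧ f x t ≤ f x' s := by
  obtain ⟨X, v, rfl, hX, rfl, hdecr⟩ := hf
  have hv : |u (X t) t + τ (X t) t * v| < K :=
    (abs_add_le _ _).trans_lt (by rwa [abs_mul, abs_of_nonneg hτ])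
  obtain ⟨s, ⟨hs, hfs⟩, hst⟩ := ((hz.eventually_abs_le_left hI hX hv hcone).and hdecr).and
    (Ioo_mem_nhdsLT ht) |>.exists
  exact ⟨X s, s, Ioo_subset_Ico_self hst, hs, hfs⟩

lemma le_of_forall_earlier_lt {f : ℝ → ℝ → ℝ} {B : ℝ} (hI : I ∈ 𝓝 t) (ht : 0 < t)
    (hτ : τ x t ≠ 0) (hK : 0 < K) (hf : ContinuousAt (uncurry f) (x, t))
    (hearlier : ∀ s ∈ Ico 0 t, ∀ x', |z x' s| ≤ L - K * s → f x' s < B)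
    (hcone : |z x t| ≤ L - K * t) : f x t ≤ B := by
  -- Along this line `z` is stationary, so the line stays in the cone without a bound on `u`.
  set X : ℝ → ℝ := fun s => x - u x t / τ x t * (s - t) with hXdef
  have hXt : X t = x := by simp [hXdef]
  have hX : HasDerivAt X (-(u x t / τ x t)) t := by
    simpa using (((hasDerivAt_id t).sub_const t).const_mul (u x t / τ x t)).const_sub x
  have hstationary : u x t + τ x t * -(u x t / τ x t) = 0 := by field_simp; ring
  have hin : ∀ᶠ s in 𝓝[<] t, |z (X s) s| ≤ L - K * s :=
    hz.eventually_abs_le_left hI hX (by rwa [hXt, hstationary, abs_zero]) (by rwa [hXt])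
  have hlim : Tendsto (fun s => f (X s) s) (𝓝[<] t) (𝓝 (f x t)) := by
    have hpath := hX.continuousAt.tendsto.prodMk_nhds (tendsto_id (x := 𝓝 t))
    rw [hXt] at hpath
    exact (hf.tendsto.comp hpath).mono_left nhdsWithin_le_nhds
  refine le_of_tendsto hlim ?_
  filter_upwards [hin, Ioo_mem_nhdsLT ht] with s hs hst
  exact (hearlier s (Ioo_subset_Ico_self hst) (X s) hs).le

lemma lt_mul_of_forall_earlier_lt {e : ℝ} (he : |e| = 1) (hI : I ∈ 𝓝 t) (ht : 0 < t)
    (hL : K * t ≤ L) (hearlier : ∀ s ∈ Ico 0 t, L - K * s < e * z x s)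
    (hu : |z x t| ≤ L - K * t → |u x t| < K) : L - K * t < e * z x t := by
  have hzx : HasDerivAt (fun s => K * s + e * z x s) (K + e * u x t) t :=
    (((hasDerivAt_id t).const_mul K).add
      ((hz.hasDerivAt_along_curve hI (hasDerivAt_const t x)).const_mul e)).congr_deriv (by simp)
  have hearlier_ev : ∀ᶠ s in 𝓝[<] t, L < K * s + e * z x s := by
    filter_upwards [Ioo_mem_nhdsLT ht] with s hs
    linarith [hearlier s (Ioo_subset_Ico_self hs)]
  have hge : L ≤ K * t + e * z x t :=
    ge_of_tendsto (hzx.continuousAt.tendsto.mono_left nhdsWithin_le_nhds)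
      (hearlier_ev.mono fun s hs => hs.le)
  by_contra! hle
  have hcone : |z x t| ≤ L - K * t := by
    rw [← one_mul |z x t|, ← he, ← abs_mul, abs_of_nonneg (by linarith)]
    exact hle
  have heu : |e * u x t| < K := by rw [abs_mul, he, one_mul]; exact hu hcone
  obtain ⟨s, hs, hs'⟩ := (hearlier_ev.and (eventually_lt_left_of_hasDerivAt_pos hzx
    (by linarith [neg_lt_of_abs_lt heu]))).exists
  linarith

end IsEulerianCoordinate

/-! ### The backward cone -/

/-- The part with `0 ≤ t ≤ t₀` of the cone `|z| ≤ L - K t`. -/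
def eulerianCone (z : ℝ → ℝ → ℝ) (K L t₀ : ℝ) : Set (ℝ × ℝ) :=
  {q | q.2 ∈ Icc 0 t₀ ∧ |z q.1 q.2| ≤ L - K * q.2}

/-- At time `t` the labels `±R` lie on the two sides of the cone `|z| ≤ L - K t`. -/
def EnclosesCone (z : ℝ → ℝ → ℝ) (K L R t : ℝ) : Prop :=
  L - K * t < z R t ∧ z (-R) t < -(L - K * t)

lemma EnclosesCone.mem_Ioo {z : ℝ → ℝ → ℝ} {K L R x t : ℝ} (h : EnclosesCone z K L R t)
    (hz : StrictMono fun x => z x t) (hcone : |z x t| ≤ L - K * t) : x ∈ Ioo (-R) R :=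
  ⟨hz.lt_iff_lt.1 (h.2.trans_le (neg_le_of_abs_le hcone)),
    hz.lt_iff_lt.1 ((le_of_abs_le hcone).trans_lt h.1)⟩

lemma isCompact_eulerianCone {z : ℝ → ℝ → ℝ} {K L R t₀ : ℝ}
    (hz : ContinuousOn (uncurry z) (univ ×ˢ Icc 0 t₀))
    (hmono : ∀ t ∈ Icc 0 t₀, StrictMono fun x => z x t)
    (henclosed : ∀ t ∈ Icc 0 t₀, EnclosesCone z K L R t) : IsCompact (eulerianCone z K L t₀) := by
  have hbox : IsCompact (Icc (-R) R ×ˢ Icc 0 t₀) := isCompact_Icc.prod isCompact_Icc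
  have heq : eulerianCone z K L t₀
      = {q ∈ Icc (-R) R ×ˢ Icc 0 t₀ | |uncurry z q| ≤ L - K * q.2} := by
    ext q
    refine ⟨fun h => ⟨⟨Ioo_subset_Icc_self ?_, h.1⟩, h.2⟩, fun h => ⟨h.1.2, h.2⟩⟩
    exact (henclosed q.2 h.1).mem_Ioo (hmono q.2 h.1) h.2
  rw [heq]
  exact hbox.of_isClosed_subset (hbox.isClosed.isClosed_le
    (hz.mono (prod_mono_left (subset_univ _))).abs (by fun_prop)) (sep_subset _ _)

lemma isCompact_setOf_not_enclosesCone_and_lt {z m : ℝ → ℝ → ℝ} {B K L R t₀ : ℝ}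
    (hz : ContinuousOn (uncurry z) (univ ×ˢ Icc 0 t₀))
    (hm : ContinuousOn (uncurry m) (univ ×ˢ Icc 0 t₀)) :
    IsCompact {q ∈ Icc (-R) R ×ˢ Icc 0 t₀ | ¬(EnclosesCone z K L R q.2
      ∧ (|z q.1 q.2| ≤ L - K * q.2 → m q.1 q.2 < B))} := by
  set box := Icc (-R) R ×ˢ Icc 0 t₀
  have hbox : IsCompact box := isCompact_Icc.prod isCompact_Icc
  have hsub : box ⊆ univ ×ˢ Icc 0 t₀ := prod_mono_left (subset_univ _)
  have hside : ∀ a : ℝ, ContinuousOn (fun q : ℝ × ℝ => z a q.2) box := fun a =>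
    hz.comp (f := fun q : ℝ × ℝ => (a, q.2)) (by fun_prop) fun _ hq => ⟨mem_univ _, hq.2⟩
  have hheight : ContinuousOn (fun q : ℝ × ℝ => L - K * q.2) box := by fun_prop
  have hright := hbox.isClosed.isClosed_le (hside R) hheight
  have hleft := hbox.isClosed.isClosed_le hheight.neg (hside (-R))
  have hcone := hbox.isClosed.isClosed_le (hz.mono hsub).abs hheight
  have hlarge := hcone.isClosed_le (continuousOn_const (c := B))
    (hm.mono ((sep_subset _ _).trans hsub))
  refine hbox.of_isClosed_subset ?_ (sep_subset _ _)
  convert (hright.union hleft).union hlarge using 1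
  ext q
  simp only [EnclosesCone, uncurry, mem_ofPred_eq, mem_union, Pi.neg_apply, not_and_or, not_lt,
    Classical.not_imp]
  tauto

namespace GenPSysSol

variable {p : ℝ → ℝ} {τ u z : ℝ → ℝ → ℝ} {T B K L R x t t₀ : ℝ} (hp : IsConvexPressure p)
include hp

lemma exists_speed_lt {I : Set ℝ} (hsol : GenPSysSol p I 1 τ u) (B : ℝ) :
    ∃ K, ∀ x, ∀ t ∈ I, riemannMagnitude p τ u x t ≤ B →
      |u x t| + τ x t * soundSpeed p (τ x t) < K := by
  obtain ⟨A, hA⟩ := hp.exists_mul_soundSpeed_le B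
  refine ⟨A + B + 1, fun x t ht hm => ?_⟩
  unfold riemannMagnitude at hm
  linarith [hA _ (hsol.specificVolume_pos x ht) (by linarith [abs_nonneg (u x t)]),
    abs_nonneg (soundPotential p (τ x t))]

section Cone

variable (hsol : GenPSysSol p (Ico 0 T) 1 τ u) (hz : IsEulerianCoordinate τ u (Ico 0 T) z)
include hsol hz

lemma riemannMagnitude_le_of_forall_earlier_lt (hK : 0 < K) (ht : t ∈ Ioo 0 T)
    (hearlier : ∀ s ∈ Ico 0 t, ∀ x', |z x' s| ≤ L - K * s → riemannMagnitude p τ u x' s < B)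
    (hcone : |z x t| ≤ L - K * t) : riemannMagnitude p τ u x t ≤ B :=
  have hI := Ico_mem_nhds ht.1 ht.2
  hz.le_of_forall_earlier_lt hI ht.1 (hsol.specificVolume_pos x (Ioo_subset_Ico_self ht)).ne' hK
    ((hsol.continuousOn_riemannMagnitude hp).continuousAt (prod_mem_nhds univ_mem hI))
    hearlier hcone

variable (hK : 0 < K) (hspeed : ∀ x, ∀ t ∈ Ico 0 T, riemannMagnitude p τ u x t ≤ B →
  |u x t| + τ x t * soundSpeed p (τ x t) < K)
include hK hspeed

lemma riemannMagnitude_lt_of_forall_earlier_lt (ht : t ∈ Ioo 0 T)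
    (hearlier : ∀ s ∈ Ico 0 t, ∀ x', |z x' s| ≤ L - K * s → riemannMagnitude p τ u x' s < B)
    (hcone : |z x t| ≤ L - K * t) : riemannMagnitude p τ u x t < B := by
  have hle := hsol.riemannMagnitude_le_of_forall_earlier_lt hp hz hK ht hearlier hcone
  have hI := Ico_mem_nhds ht.1 ht.2
  have ht' := Ioo_subset_Ico_self ht
  obtain ⟨x', s, hs, hcone', hdecr⟩ := hz.exists_earlier_le hI ht.1
    (hsol.specificVolume_pos x ht').le (hsol.riemannMagnitude_decreasesAlongCharacteristic hp hI x)
    (hspeed x t ht' hle) hcone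
  exact hdecr.trans_lt (hearlier s hs x' hcone')

lemma enclosesCone_of_forall_earlier (ht : t ∈ Ioo 0 T) (hL : K * t ≤ L)
    (henclosed : ∀ s ∈ Ico 0 t, EnclosesCone z K L R s)
    (hearlier : ∀ s ∈ Ico 0 t, ∀ x', |z x' s| ≤ L - K * s → riemannMagnitude p τ u x' s < B) :
    EnclosesCone z K L R t := by
  have hI := Ico_mem_nhds ht.1 ht.2
  have hu : ∀ x, |z x t| ≤ L - K * t → |u x t| < K := fun x hcone => by
    have ht' := Ioo_subset_Ico_self ht
    have hv := hsol.specificVolume_pos x ht'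
    have hle := hsol.riemannMagnitude_le_of_forall_earlier_lt hp hz hK ht hearlier hcone
    linarith [hspeed x t ht' hle, mul_pos hv (hp.soundSpeed_pos hv)]
  have hright := hz.lt_mul_of_forall_earlier_lt (x := R) abs_one hI ht.1 hL
    (fun s hs => by linarith [(henclosed s hs).1]) (hu R)
  have hleft := hz.lt_mul_of_forall_earlier_lt (x := -R) (e := -1) (by simp) hI ht.1 hL
    (fun s hs => by linarith [(henclosed s hs).2]) (hu (-R))
  exact ⟨by linarith, by linarith⟩

variable (ht₀ : t₀ < T) (hL : K * t₀ ≤ L) (hR : EnclosesCone z K L R 0)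
  (hm : ∀ x, riemannMagnitude p τ u x 0 < B)
include ht₀ hL hR hm

lemma enclosesCone_and_riemannMagnitude_lt : ∀ q ∈ Icc (-R) R ×ˢ Icc 0 t₀,
    EnclosesCone z K L R q.2 ∧
      (|z q.1 q.2| ≤ L - K * q.2 → riemannMagnitude p τ u q.1 q.2 < B) := by
  have hstrip : univ ×ˢ Icc 0 t₀ ⊆ (univ : Set ℝ) ×ˢ Ico 0 T :=
    prod_mono_right (Icc_subset_Ico_right ht₀)
  refine forall_mem_of_isCompact_of_forall_lt (time := Prod.snd) continuousOn_snd
    (isCompact_setOf_not_enclosesCone_and_lt (hz.continuousOn.mono hstrip)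
      ((hsol.continuousOn_riemannMagnitude hp).mono hstrip)) ?_
  rintro ⟨x, t⟩ ⟨hx, ht⟩ hind
  rcases ht.1.eq_or_lt with rfl | htpos
  · exact ⟨hR, fun _ => hm x⟩
  have htT : t ∈ Ioo 0 T := ⟨htpos, ht.2.trans_lt ht₀⟩
  have hpast : ∀ s ∈ Ico 0 t, s ∈ Icc 0 t₀ := fun s hs => ⟨hs.1, hs.2.le.trans ht.2⟩
  have henclosed : ∀ s ∈ Ico 0 t, EnclosesCone z K L R s := fun s hs =>
    (hind (x, s) ⟨hx, hpast s hs⟩ hs.2).1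
  have hearlier : ∀ s ∈ Ico 0 t, ∀ x', |z x' s| ≤ L - K * s → riemannMagnitude p τ u x' s < B := by
    intro s hs x' hcone
    have hsT : s ∈ Ico 0 T := ⟨hs.1, hs.2.trans htT.2⟩
    have hx' := (henclosed s hs).mem_Ioo
      (hz.strictMono hsT fun x => hsol.specificVolume_pos x hsT) hcone
    exact (hind (x', s) ⟨Ioo_subset_Icc_self hx', hpast s hs⟩ hs.2).2 hcone
  have hLt : K * t ≤ L := (mul_le_mul_of_nonneg_left ht.2 hK.le).trans hL
  exact ⟨hsol.enclosesCone_of_forall_earlier hp hz hK hspeed htT hLt henclosed hearlier,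
    hsol.riemannMagnitude_lt_of_forall_earlier_lt hp hz hK hspeed htT hearlier⟩

lemma isCompact_eulerianCone_and_riemannMagnitude_lt (hR₀ : 0 ≤ R) :
    IsCompact (eulerianCone z K L t₀) ∧
      ∀ q ∈ eulerianCone z K L t₀, riemannMagnitude p τ u q.1 q.2 < B := by
  have hbox := hsol.enclosesCone_and_riemannMagnitude_lt hp hz hK hspeed ht₀ hL hR hm
  have hsub : Icc 0 t₀ ⊆ Ico 0 T := Icc_subset_Ico_right ht₀
  have henclosed : ∀ t ∈ Icc 0 t₀, EnclosesCone z K L R t := fun t ht =>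
    (hbox (0, t) ⟨⟨neg_nonpos.2 hR₀, hR₀⟩, ht⟩).1
  have hmono : ∀ t ∈ Icc 0 t₀, StrictMono fun x => z x t := fun t ht =>
    hz.strictMono (hsub ht) fun x => hsol.specificVolume_pos x (hsub ht)
  refine ⟨isCompact_eulerianCone (hz.continuousOn.mono (prod_mono_right hsub)) hmono henclosed,
    fun q hq => (hbox q ⟨Ioo_subset_Icc_self ?_, hq.1⟩).2 hq.2⟩
  exact (henclosed q.2 hq.1).mem_Ioo (hmono q.2 hq.1) hq.2

end Cone

end GenPSysSol

lemma IsEulerianCoordinate.lt_of_decreasesAlongCharacteristic {τ u z c f : ℝ → ℝ → ℝ}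
    {T K L M t₀ : ℝ} (hz : IsEulerianCoordinate τ u (Ico 0 T) z)
    (hτ : ∀ x, ∀ t ∈ Ico 0 T, 0 ≤ τ x t) (ht₀ : t₀ < T)
    (hcompact : IsCompact (eulerianCone z K L t₀))
    (hspeed : ∀ q ∈ eulerianCone z K L t₀, |uncurry u q| + uncurry τ q * uncurry c q < K)
    (hf : ContinuousOn (uncurry f) (univ ×ˢ Ico 0 T))
    (hdecr : ∀ x, ∀ t ∈ Ioo 0 T, DecreasesAlongCharacteristic f (c x t) x t)
    (hM : ∀ x, f x 0 < M) : ∀ q ∈ eulerianCone z K L t₀, uncurry f q < M := by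
  have hsub : eulerianCone z K L t₀ ⊆ univ ×ˢ Ico 0 T := by
    rintro q ⟨ht, -⟩
    exact ⟨mem_univ _, Icc_subset_Ico_right ht₀ ht⟩
  have hbad : IsCompact {q ∈ eulerianCone z K L t₀ | ¬uncurry f q < M} := by
    simp only [not_lt]
    exact hcompact.of_isClosed_subset
      (hcompact.isClosed.isClosed_le (continuousOn_const (c := M)) (hf.mono hsub)) (sep_subset _ _)
  refine forall_mem_of_isCompact_of_forall_lt (time := Prod.snd) continuousOn_snd hbad ?_
  rintro ⟨x, t⟩ hq hind
  obtain ⟨ht, hcone⟩ : t ∈ Icc 0 t₀ ∧ |z x t| ≤ L - K * t := hq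
  rcases ht.1.eq_or_lt with rfl | htpos
  · exact hM x
  have htT : t ∈ Ioo 0 T := ⟨htpos, ht.2.trans_lt ht₀⟩
  obtain ⟨x', s, hs, hcone', hle⟩ := hz.exists_earlier_le (Ico_mem_nhds htT.1 htT.2) htpos
    (hτ x t (Ioo_subset_Ico_self htT)) (hdecr x t htT) (hspeed (x, t) ⟨ht, hcone⟩) hcone
  exact hle.trans_lt (hind (x', s) ⟨⟨hs.1, hs.2.le.trans ht.2⟩, hcone'⟩ hs.2)

/-! ### Bounds on the gradient variables -/

namespace GenPSysSol

variable {p : ℝ → ℝ} {τ u : ℝ → ℝ → ℝ} {T : ℝ}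

lemma gradientVariable_le (hp : IsConvexPressure p) (hsol : GenPSysSol p (Ico 0 T) 1 τ u)
    {m B σ Y : ℝ} (hm : 0 < m) (hτ : ∀ x, m ≤ τ x 0) (hB : ∀ x, riemannMagnitude p τ u x 0 < B)
    (hσ : |σ| = 1) (hY : ∀ x, gradientVariable p τ u σ x 0 ≤ Y) (x : ℝ) {t : ℝ}
    (ht : t ∈ Ico 0 T) : gradientVariable p τ u σ x t ≤ Y := by
  refine le_of_forall_gt fun M hM => ?_
  have hT : 0 < T := ht.1.trans_lt ht.2
  have h0 : (0 : ℝ) ∈ Ico 0 T := ⟨le_rfl, hT⟩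
  obtain ⟨z, hz⟩ := hsol.exists_isEulerianCoordinate (convex_Ico 0 T) (by simpa using hT)
  obtain ⟨K, hspeed⟩ := hsol.exists_speed_lt hp B
  have hK : 0 < K := by
    have hv := hsol.specificVolume_pos 0 h0
    have hc := hp.soundSpeed_pos hv
    exact lt_of_le_of_lt (by positivity) (hspeed 0 0 h0 (hB 0).le)
  set L := K * t + |z x t| with hLdef
  have hKt : K * t ≤ L := le_add_of_nonneg_right (abs_nonneg _)
  obtain ⟨R, hR₀, hR⟩ := hz.exists_lt_and_lt_neg h0 hm hτ L
  obtain ⟨hcompact, hmagnitude⟩ := hsol.isCompact_eulerianCone_and_riemannMagnitude_lt hp hz hK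
    hspeed ht.2 hKt (by simpa [EnclosesCone] using hR) hB hR₀
  refine hz.lt_of_decreasesAlongCharacteristic (c := fun x t => soundSpeed p (τ x t))
    (fun x t ht => (hsol.specificVolume_pos x ht).le) ht.2 hcompact
    (fun q hq => hspeed q.1 q.2 ⟨hq.1.1, hq.1.2.trans_lt ht.2⟩ (hmagnitude q hq).le)
    (hsol.continuousOn_gradientVariable hp (uniqueDiffOn_Ico 0 T) σ)
    (fun x t ht => hsol.gradientVariable_decreasesAlongCharacteristic hp hσ
      (Ico_mem_nhds ht.1 ht.2) x)
    (fun x => (hY x).trans_lt hM) (x, t) ⟨⟨ht.1, le_rfl⟩, ?_⟩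
  simp [hLdef]

end GenPSysSol

namespace AssumptionA

variable {M₁ M₂ : ℝ} {τ₀ u₀ : ℝ → ℝ} (hA : AssumptionA M₁ M₂ τ₀ u₀)
include hA

lemma lower_pos : 0 < M₂ := hA.2.2.2.1

lemma lower_le (x : ℝ) : M₂ ≤ τ₀ x := hA.2.2.2.2.2 x

lemma add_abs_le (x : ℝ) : |τ₀ x| + |deriv τ₀ x| + |u₀ x| + |deriv u₀ x| ≤ M₁ := hA.2.2.2.2.1 x

end AssumptionA

namespace IsConvexPressure

variable {p : ℝ → ℝ} {τ u : ℝ → ℝ → ℝ} {T M₁ M₂ : ℝ} (hp : IsConvexPressure p)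
  (hA : AssumptionA M₁ M₂ (fun x => τ x 0) fun x => u x 0)
include hp hA

lemma exists_riemannMagnitude_lt : ∃ B, ∀ x, riemannMagnitude p τ u x 0 < B := by
  refine ⟨M₁ + max |soundPotential p M₁| |soundPotential p M₂| + 1, fun x => ?_⟩
  have hsum := hA.add_abs_le x
  have hlower := hA.lower_le x
  have hv : 0 < τ x 0 := hA.lower_pos.trans_le hlower
  have hnonneg := abs_nonneg (deriv (fun x => τ x 0) x)
  have hnonneg' := abs_nonneg (deriv (fun x => u x 0) x)
  have hupper : τ x 0 ≤ M₁ := by linarith [le_abs_self (τ x 0), abs_nonneg (u x 0)]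
  have hanti := hp.strictAntiOn_soundPotential.antitoneOn
  have hφ := abs_le_max_abs_abs (hanti hv (hv.trans_le hupper) hupper)
    (hanti hA.lower_pos hv hlower)
  unfold riemannMagnitude
  linarith [abs_nonneg (τ x 0)]

lemma bddAbove_range_gradientVariable {I : Set ℝ} (hsol : GenPSysSol p I 1 τ u) (h0 : 0 ∈ I)
    {σ : ℝ} (hσ : |σ| = 1) : BddAbove (range fun x => gradientVariable p τ u σ x 0) := by
  refine ⟨√(soundSpeed p M₂) * (M₁ + soundSpeed p M₂ * M₁), ?_⟩
  rintro _ ⟨x, rfl⟩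
  have hv := hsol.specificVolume_pos x h0
  have hc := hp.soundSpeed_pos hv
  have hcM : soundSpeed p (τ x 0) ≤ soundSpeed p M₂ :=
    hp.antitoneOn_soundSpeed hA.lower_pos hv (hA.lower_le x)
  have hsum : |τ x 0| + |spaceDeriv τ x 0| + |u x 0| + |spaceDeriv u x 0| ≤ M₁ := hA.add_abs_le x
  have hτ := abs_nonneg (τ x 0)
  have hτx := abs_nonneg (spaceDeriv τ x 0)
  have hu := abs_nonneg (u x 0)
  have hux := abs_nonneg (spaceDeriv u x 0)
  have hwx : |spaceDeriv (riemannInvariant p τ u σ) x 0| ≤ M₁ + soundSpeed p M₂ * M₁ :=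
    calc |spaceDeriv (riemannInvariant p τ u σ) x 0|
        ≤ |spaceDeriv u x 0| + soundSpeed p (τ x 0) * |spaceDeriv τ x 0| := by
          rw [hsol.spaceDeriv_riemannInvariant hp h0]
          refine (abs_sub _ _).trans_eq ?_
          rw [abs_mul, abs_mul, hσ, one_mul, abs_of_pos hc]
      _ ≤ M₁ + soundSpeed p M₂ * M₁ := by
          gcongr <;> linarith
  calc gradientVariable p τ u σ x 0
      ≤ √(soundSpeed p (τ x 0)) * |spaceDeriv (riemannInvariant p τ u σ) x 0| :=
        mul_le_mul_of_nonneg_left (le_abs_self _) (Real.sqrt_nonneg _)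
    _ ≤ √(soundSpeed p M₂) * (M₁ + soundSpeed p M₂ * M₁) := by gcongr

end IsConvexPressure

lemma GenPSysSol.gradientVariable_le_iSup {p : ℝ → ℝ} {τ u : ℝ → ℝ → ℝ} {T M₁ M₂ σ t : ℝ}
    (hp : IsConvexPressure p) (hsol : GenPSysSol p (Ico 0 T) 1 τ u)
    (hA : AssumptionA M₁ M₂ (fun x => τ x 0) fun x => u x 0) (hσ : |σ| = 1) (x : ℝ)
    (ht : t ∈ Ico 0 T) :
    gradientVariable p τ u σ x t ≤ ⨆ x', gradientVariable p τ u σ x' 0 := by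
  obtain ⟨B, hB⟩ := hp.exists_riemannMagnitude_lt hA
  have hbdd := hp.bddAbove_range_gradientVariable hA hsol ⟨le_rfl, ht.1.trans_lt ht.2⟩ hσ
  exact hsol.gradientVariable_le hp hA.lower_pos hA.lower_le hB hσ (le_ciSup hbdd) x ht

theorem psystem_general_pressure_gradient_upper_bound_general
    (p : ℝ → ℝ) (T M₁ M₂ : ℝ)
    (hp : ContDiffOn ℝ 2 p (Set.Ioi 0))
    (hp' : ∀ v ∈ Set.Ioi (0 : ℝ), deriv p v < 0)
    (hp'' : ∀ v ∈ Set.Ioi (0 : ℝ), 0 ≤ deriv (deriv p) v)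
    (τ₀ u₀ : ℝ → ℝ) (hA : AssumptionA M₁ M₂ τ₀ u₀)
    (τ u : ℝ → ℝ → ℝ) (hsol : GenPSysSol p (Set.Ico 0 T) 1 τ u)
    (hτ0 : ∀ x, τ x 0 = τ₀ x) (hu0 : ∀ x, u x 0 = u₀ x)
    (y q : ℝ → ℝ → ℝ)
    (hy : ∀ x t, y x t = Real.sqrt (Real.sqrt (-deriv p (τ x t)))
        * deriv (fun x' => u x' t + ∫ ξ in (τ x' t)..1, Real.sqrt (-deriv p ξ)) x)
    (hq : ∀ x t, q x t = Real.sqrt (Real.sqrt (-deriv p (τ x t)))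
        * deriv (fun x' => u x' t - ∫ ξ in (τ x' t)..1, Real.sqrt (-deriv p ξ)) x) :
    ∀ x : ℝ, ∀ t ∈ Set.Ico 0 T, y x t ≤ ⨆ x', y x' 0 ∧ q x t ≤ ⨆ x', q x' 0 := by
  have hpressure : IsConvexPressure p := ⟨hp, hp', hp''⟩
  obtain rfl : (fun x => τ x 0) = τ₀ := funext hτ0
  obtain rfl : (fun x => u x 0) = u₀ := funext hu0
  obtain rfl : y = gradientVariable p τ u 1 := by
    ext x t
    simp only [hy, gradientVariable, spaceDeriv, riemannInvariant, soundPotential, soundSpeed,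
      one_mul]
  obtain rfl : q = gradientVariable p τ u (-1) := by
    ext x t
    simp only [hq, gradientVariable, spaceDeriv, riemannInvariant, soundPotential, soundSpeed,
      neg_one_mul, sub_eq_add_neg]
  exact fun x t ht => ⟨hsol.gradientVariable_le_iSup hpressure hA abs_one x ht,
    hsol.gradientVariable_le_iSup hpressure hA (by simp) x ht⟩

/-- Lemma 2.10: for a general pressure `p ∈ C³((0,∞))` with `p' < 0`, `p'' > 0`, and
initial data satisfying Assumption A, every `C¹` solution of the p-system on `ℝ × [0,T)`
satisfies `y ≤ Y := max{0, sup_x y(x,0)}` and `q ≤ Q := max{0, sup_x q(x,0)}`, where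
`y = √c · s_x`, `q = √c · r_x`, `c = √(−p')`,
`s = u + ∫_τ^1 c`, `r = u − ∫_τ^1 c`. -/
theorem psystem_general_pressure_gradient_upper_bound
    (p : ℝ → ℝ) (T M₁ M₂ : ℝ) (hT : 0 < T)
    (hp : ContDiffOn ℝ 3 p (Set.Ioi 0))
    (hp' : ∀ v ∈ Set.Ioi (0 : ℝ), deriv p v < 0)
    (hp'' : ∀ v ∈ Set.Ioi (0 : ℝ), 0 < deriv (deriv p) v)
    (τ₀ u₀ : ℝ → ℝ) (hA : AssumptionA M₁ M₂ τ₀ u₀)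
    (τ u : ℝ → ℝ → ℝ) (hsol : GenPSysSol p (Set.Ico 0 T) 1 τ u)
    (hτ0 : ∀ x, τ x 0 = τ₀ x) (hu0 : ∀ x, u x 0 = u₀ x)
    (y q : ℝ → ℝ → ℝ)
    (hy : ∀ x t, y x t = Real.sqrt (Real.sqrt (-deriv p (τ x t)))
        * deriv (fun x' => u x' t + ∫ ξ in (τ x' t)..1, Real.sqrt (-deriv p ξ)) x)
    (hq : ∀ x t, q x t = Real.sqrt (Real.sqrt (-deriv p (τ x t)))
        * deriv (fun x' => u x' t - ∫ ξ in (τ x' t)..1, Real.sqrt (-deriv p ξ)) x) :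
    ∀ x : ℝ, ∀ t ∈ Set.Ico 0 T,
      y x t ≤ max 0 (⨆ x', y x' 0) ∧ q x t ≤ max 0 (⨆ x', q x' 0) :=
  fun x t ht => (psystem_general_pressure_gradient_upper_bound_general p T M₁ M₂
    (hp.of_le (by norm_num)) hp' (fun v hv => (hp'' v hv).le) τ₀ u₀ hA τ u hsol hτ0 hu0 y q hy hq
    x t ht).imp le_max_of_le_right le_max_of_le_right
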